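/- Let R be a commutative ring, M an R-module, C an R-linear relation on M, and I an ideal of R with I·M ⊆ (C⁻¹)' + C'. Then C^♯ ∩ I·M ⊆ C^♭; in particular I annihilates C^♯/C^♭, so C^♯/C^♭ is an R/I-module. -/

import Mathlib

variable {R : Type*} [CommRing R] {M : Type*} [AddCommGroup M] [Module R M]

/-- The inverse of a linear relation `C ⊆ M ⊕ M`. -/
def relInv (C : Submodule R (M × M)) : Submodule R (M × M) :=
  C.comap (LinearEquiv.prodComm R M M).toLinearMap

/-- `C'' = {m : ∃ (mₙ), m₀ = m and mₙ₊₁ ∈ Cmₙ for all n}`. -/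
def relDD (C : Submodule R (M × M)) : Set M :=
  {m | ∃ f : ℕ → M, f 0 = m ∧ ∀ n, (f n, f (n + 1)) ∈ C}

/-- `C' = {m : ∃ (mₙ), m₀ = m, mₙ₊₁ ∈ Cmₙ for all n, and mₙ = 0 for n ≫ 0}`. -/
def relD (C : Submodule R (M × M)) : Set M :=
  {m | ∃ f : ℕ → M, f 0 = m ∧ (∀ n, (f n, f (n + 1)) ∈ C) ∧ ∃ N, ∀ n, N ≤ n → f n = 0}

/-- `C^♯ = C'' ∩ (C⁻¹)''`. -/
def relSharp (C : Submodule R (M × M)) : Set M :=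
  relDD C ∩ relDD (relInv C)

/-- `C^♭ = C'' ∩ (C⁻¹)' + (C⁻¹)'' ∩ C'`. -/
def relFlat (C : Submodule R (M × M)) : Set M :=
  {m | ∃ a ∈ relDD C ∩ relD (relInv C), ∃ b ∈ relDD (relInv C) ∩ relD C, m = a + b}

/-! Since `(C⁻¹)' ⊆ (C⁻¹)''` and `C' ⊆ C''`, two applications of the modular law in the lattice of
submodules of `M` give `C^♭ = C^♯ ∩ ((C⁻¹)' + C')`. Hence a submodule such as `I·M` that lies in
`(C⁻¹)' + C'` meets `C^♯` inside `C^♭`. -/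

theorem inf_inf_sup_eq_of_le {α : Type*} [Lattice α] [IsModularLattice α] {x y a b : α}
    (hay : a ≤ y) (hbx : b ≤ x) : x ⊓ y ⊓ (a ⊔ b) = x ⊓ a ⊔ y ⊓ b :=
  calc
    x ⊓ y ⊓ (a ⊔ b) = x ⊓ ((a ⊔ b) ⊓ y) := by rw [inf_assoc, inf_comm y]
    _ = x ⊓ (a ⊔ y ⊓ b) := by rw [sup_inf_assoc_of_le b hay, inf_comm b]
    _ = x ⊓ a ⊔ y ⊓ b := (inf_sup_assoc_of_le a (inf_le_right.trans hbx)).symm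

/-- `C''` bundled as a submodule of `M`, so that lattice identities apply to it. -/
def relDDSubmodule (C : Submodule R (M × M)) : Submodule R M where
  carrier := relDD C
  zero_mem' := ⟨0, rfl, fun _ => C.zero_mem⟩
  add_mem' := by
    rintro _ _ ⟨f, rfl, hf⟩ ⟨g, rfl, hg⟩
    exact ⟨f + g, rfl, fun n => C.add_mem (hf n) (hg n)⟩
  smul_mem' := by
    rintro r _ ⟨f, rfl, hf⟩
    exact ⟨r • f, rfl, fun n => C.smul_mem r (hf n)⟩

/-- `C'` bundled as a submodule of `M`, so that lattice identities apply to it. -/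
def relDSubmodule (C : Submodule R (M × M)) : Submodule R M where
  carrier := relD C
  zero_mem' := ⟨0, rfl, fun _ => C.zero_mem, 0, fun _ _ => rfl⟩
  add_mem' := by
    rintro _ _ ⟨f, rfl, hf, K, hfK⟩ ⟨g, rfl, hg, L, hgL⟩
    refine ⟨f + g, rfl, fun n => C.add_mem (hf n) (hg n), max K L, fun n hn => ?_⟩
    rw [Pi.add_apply, hfK n (le_of_max_le_left hn), hgL n (le_of_max_le_right hn), add_zero]
  smul_mem' := by
    rintro r _ ⟨f, rfl, hf, K, hfK⟩
    refine ⟨r • f, rfl, fun n => C.smul_mem r (hf n), K, fun n hn => ?_⟩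
    rw [Pi.smul_apply, hfK n hn, smul_zero]

/-- `C^♯` as a submodule of `M`: the numerator of the quotient `C^♯/C^♭`. -/
def relSharpSubmodule (C : Submodule R (M × M)) : Submodule R M :=
  relDDSubmodule C ⊓ relDDSubmodule (relInv C)

/-- `C^♭` as a submodule of `M`: the denominator of the quotient `C^♯/C^♭`. -/
def relFlatSubmodule (C : Submodule R (M × M)) : Submodule R M :=
  relDDSubmodule C ⊓ relDSubmodule (relInv C) ⊔ relDDSubmodule (relInv C) ⊓ relDSubmodule C

theorem mem_relSharpSubmodule {C : Submodule R (M × M)} {m : M} :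
    m ∈ relSharpSubmodule C ↔ m ∈ relSharp C :=
  Iff.rfl

theorem mem_relDSubmodule_sup {C D : Submodule R (M × M)} {m : M} :
    m ∈ relDSubmodule C ⊔ relDSubmodule D ↔ ∃ a ∈ relD C, ∃ b ∈ relD D, m = a + b := by
  simp only [Submodule.mem_sup, eq_comm (a := m)]
  rfl

theorem mem_relFlatSubmodule {C : Submodule R (M × M)} {m : M} :
    m ∈ relFlatSubmodule C ↔ m ∈ relFlat C := by
  simp only [relFlatSubmodule, relFlat, Submodule.mem_sup, Set.mem_ofPred_eq, eq_comm (a := m)]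
  rfl

theorem relDSubmodule_le_relDDSubmodule (C : Submodule R (M × M)) :
    relDSubmodule C ≤ relDDSubmodule C :=
  fun _ ⟨f, hf₀, hf, _⟩ => ⟨f, hf₀, hf⟩

theorem relFlatSubmodule_eq_relSharpSubmodule_inf (C : Submodule R (M × M)) :
    relFlatSubmodule C =
      relSharpSubmodule C ⊓ (relDSubmodule (relInv C) ⊔ relDSubmodule C) :=
  (inf_inf_sup_eq_of_le (relDSubmodule_le_relDDSubmodule (relInv C))
    (relDSubmodule_le_relDDSubmodule C)).symm

/-- if `I·M ⊆ (C⁻¹)' + C'` then `C^♯ ∩ I·M ⊆ C^♭`; in particular `I`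
annihilates `C^♯/C^♭`. -/
theorem stmt6 (C : Submodule R (M × M)) (I : Ideal R)
    (h : ∀ m : M, m ∈ (I • (⊤ : Submodule R M) : Submodule R M) →
      ∃ a ∈ relD (relInv C), ∃ b ∈ relD C, m = a + b) :
    (∀ m ∈ relSharp C, m ∈ (I • (⊤ : Submodule R M) : Submodule R M) → m ∈ relFlat C) ∧
    (∀ r ∈ I, ∀ m ∈ relSharp C, r • m ∈ relFlat C) := by
  have smul_top_le : I • (⊤ : Submodule R M) ≤ relDSubmodule (relInv C) ⊔ relDSubmodule C :=
    fun m hm => mem_relDSubmodule_sup.2 (h m hm)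
  have sharp_inf_le : relSharpSubmodule C ⊓ I • (⊤ : Submodule R M) ≤ relFlatSubmodule C := by
    rw [relFlatSubmodule_eq_relSharpSubmodule_inf]
    exact inf_le_inf_left _ smul_top_le
  simp only [← mem_relSharpSubmodule, ← mem_relFlatSubmodule]
  refine ⟨fun m hm hmI => sharp_inf_le ⟨hm, hmI⟩, fun r hr m hm => sharp_inf_le ⟨?_, ?_⟩⟩
  · exact (relSharpSubmodule C).smul_mem r hm
  · exact Submodule.smul_mem_smul hr Submodule.mem_top
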